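/- The classification error function E is homogeneous of degree 0 and its restriction to the unit sphere S^{p−1} = {α ∈ ℝ^p : ‖α‖ = 1} is uniformly continuous; moreover E(α) = E(−α) for every unit vector α, so E induces a well-defined continuous function on the real projective space of lines through the origin in ℝ^p. -/

import Mathlib

open MeasureTheory ProbabilityTheory Matrix Filter Set

noncomputable def Phi (t : ℝ) : ℝ := ((gaussianReal 0 1) (Set.Iic t)).toReal
noncomputable def calE (r g : ℝ) : ℝ :=
  if g = 1 then Phi (-(|r| / 2))
  else
    1/2
      + (1/2) * Phi ((r - g * Real.sqrt (r^2 + (g^2 - 1) * Real.log (g^2))) / (g^2 - 1))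
      - (1/2) * Phi ((r + g * Real.sqrt (r^2 + (g^2 - 1) * Real.log (g^2))) / (g^2 - 1))
      + (1/2) * Phi ((r * g + Real.sqrt (r^2 + (g^2 - 1) * Real.log (g^2))) / (g^2 - 1))
      - (1/2) * Phi ((r * g - Real.sqrt (r^2 + (g^2 - 1) * Real.log (g^2))) / (g^2 - 1))
noncomputable def Evec {p : ℕ} (μ0 μ1 : Fin p → ℝ) (S0 S1 : Matrix (Fin p) (Fin p) ℝ)
    (α : Fin p → ℝ) : ℝ :=
  calE ((dotProduct α μ0 - dotProduct α μ1) / Real.sqrt (dotProduct α (S1.mulVec α)))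
    (Real.sqrt (dotProduct α (S0.mulVec α)) / Real.sqrt (dotProduct α (S1.mulVec α)))

instance {K V : Type*} [DivisionRing K] [AddCommGroup V] [Module K V] [TopologicalSpace V] :
    TopologicalSpace (Projectivization K V) :=
  inferInstanceAs (TopologicalSpace (Quotient (projectivizationSetoid K V)))

/-!
The only delicate point is the continuity of `calE` at `g = 1`. Write `s` for the square root of the
discriminant `Δ`; at `g = 1` it equals `|r|`, and since `calE` is even in `r` we may take `r ≥ 0`.
Up to affine terms `calE` is a difference of two gaps `Phi z - Phi x`, one for each of `s` and `-s`,
with `z - x = (r ∓ s) / (g + 1)`. For the sign `+` we have `z - x → 0`, although `x` itself may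
diverge, so the gap vanishes because `Phi` is uniformly continuous. For the sign `-`, rationalizing
the numerator shows `x → -r / 2` and `z → r / 2` when `r > 0`, while for `r = 0` the first argument
applies again.
-/

open scoped Topology NNReal

section Cdf

variable {μ : Measure ℝ} [IsProbabilityMeasure μ]

lemma lipschitzWith_cdf_of_le_smul_volume {C : ℝ≥0} (h : μ ≤ C • volume) :
    LipschitzWith C (cdf μ) := by
  refine LipschitzWith.of_le_add_mul C fun x y => ?_
  rcases le_total x y with hxy | hyx
  · exact (monotone_cdf μ hxy).trans (le_add_of_nonneg_right (by positivity))
  · have hIoc : ENNReal.ofReal (cdf μ x - cdf μ y) ≤ ENNReal.ofReal (C * (x - y)) := by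
      calc ENNReal.ofReal (cdf μ x - cdf μ y) = μ (Ioc y x) := by
            rw [← StieltjesFunction.measure_Ioc, measure_cdf]
        _ ≤ (C • volume) (Ioc y x) := h _
        _ = ENNReal.ofReal (C * (x - y)) := by
            rw [Measure.smul_apply, Real.volume_Ioc, ENNReal.ofReal_mul C.coe_nonneg,
              ENNReal.ofReal_coe_nnreal, ENNReal.smul_def, smul_eq_mul]
    have hC : 0 ≤ C * (x - y) := mul_nonneg C.coe_nonneg (sub_nonneg.2 hyx)
    rw [Real.dist_eq, abs_of_nonneg (sub_nonneg.2 hyx)]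
    linarith [(ENNReal.ofReal_le_ofReal_iff hC).1 hIoc]

lemma cdf_neg [NullSingletonClass μ] [μ.IsNegInvariant] (x : ℝ) :
    cdf μ (-x) = 1 - cdf μ x := by
  calc cdf μ (-x) = μ.real (Iic (-x)) := cdf_eq_real μ _
    _ = μ.real (Ici x) := by rw [← neg_Ici, Measure.real, Measure.measure_neg, Measure.real]
    _ = μ.real (Iic x)ᶜ := by rw [compl_Iic]; exact measureReal_congr Ioi_ae_eq_Ici.symm
    _ = 1 - cdf μ x := by rw [probReal_compl_eq_one_sub measurableSet_Iic, cdf_eq_real]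

end Cdf

section Gaussian

lemma gaussianPDFReal_le_inv_sqrt (m : ℝ) (v : ℝ≥0) (x : ℝ) :
    gaussianPDFReal m v x ≤ (√(2 * Real.pi * v))⁻¹ := by
  refine mul_le_of_le_one_right (by positivity) (Real.exp_le_one_iff.2 ?_)
  exact div_nonpos_of_nonpos_of_nonneg (neg_nonpos.2 (sq_nonneg _)) (by positivity)

lemma gaussianReal_le_smul_volume (m : ℝ) {v : ℝ≥0} (hv : v ≠ 0) :
    gaussianReal m v ≤ (√(2 * Real.pi * v))⁻¹.toNNReal • volume := by
  rw [gaussianReal_of_var_ne_zero m hv]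
  calc volume.withDensity (gaussianPDF m v)
      ≤ volume.withDensity fun _ => ENNReal.ofReal (√(2 * Real.pi * v))⁻¹ :=
        withDensity_mono <| .of_forall fun x =>
          ENNReal.ofReal_le_ofReal (gaussianPDFReal_le_inv_sqrt m v x)
    _ = (√(2 * Real.pi * v))⁻¹.toNNReal • volume := withDensity_const _

instance isNegInvariant_gaussianReal_zero (v : ℝ≥0) : (gaussianReal 0 v).IsNegInvariant :=
  ⟨by rw [Measure.neg, gaussianReal_map_neg, neg_zero]⟩

lemma Phi_eq_cdf : Phi = cdf (gaussianReal 0 1) :=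
  funext fun x => (cdf_eq_real _ x).symm

lemma uniformContinuous_Phi : UniformContinuous Phi := by
  rw [Phi_eq_cdf]
  exact (lipschitzWith_cdf_of_le_smul_volume
    (gaussianReal_le_smul_volume 0 one_ne_zero)).uniformContinuous

@[fun_prop]
lemma continuous_Phi : Continuous Phi :=
  uniformContinuous_Phi.continuous

lemma Phi_neg (x : ℝ) : Phi (-x) = 1 - Phi x := by
  have := nullSingletonClass_gaussianReal (μ := 0) (one_ne_zero (α := ℝ≥0))
  rw [Phi_eq_cdf, cdf_neg]

end Gaussian

lemma tendsto_comp_sub_comp_zero {ι G H : Type*} [AddGroup G] [UniformSpace G]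
    [IsRightUniformAddGroup G] [AddGroup H] [UniformSpace H] [IsRightUniformAddGroup H] {f : G → H}
    (hf : UniformContinuous f) {l : Filter ι} {u v : ι → G}
    (h : Tendsto (fun i => u i - v i) l (𝓝 0)) :
    Tendsto (fun i => f (u i) - f (v i)) l (𝓝 0) := by
  have huv : Tendsto (fun i => (v i, u i)) l (uniformity G) := by
    rw [uniformity_eq_comap_nhds_zero]
    exact tendsto_comap_iff.2 h
  have hfuv := Tendsto.comp hf huv
  rw [uniformity_eq_comap_nhds_zero] at hfuv
  exact tendsto_comap_iff.1 hfuv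

section Crossing

lemma sub_one_mul_log_nonneg {x : ℝ} (hx : 0 ≤ x) : 0 ≤ (x - 1) * Real.log x := by
  rcases le_total 1 x with h | h
  · exact mul_nonneg (sub_nonneg.2 h) (Real.log_nonneg h)
  · exact mul_nonneg_of_nonpos_of_nonpos (sub_nonpos.2 h) (Real.log_nonpos hx h)

lemma sq_ne_one_of_pos {x : ℝ} (hx : 0 < x) (hx1 : x ≠ 1) : x ^ 2 ≠ 1 :=
  (pow_eq_one_iff_of_nonneg hx.le two_ne_zero).not.2 hx1

/-- The square root of the discriminant `Δ(r, g) = r² + (g² - 1) log (g²)` of the quadratic equation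
for the points where the densities of `N(-r, g²)` and `N(0, 1)` agree. -/
noncomputable def sqrtDisc (r g : ℝ) : ℝ :=
  √(r ^ 2 + (g ^ 2 - 1) * Real.log (g ^ 2))

lemma sqrtDisc_nonneg (r g : ℝ) : 0 ≤ sqrtDisc r g :=
  Real.sqrt_nonneg _

lemma sq_sqrtDisc (r g : ℝ) :
    sqrtDisc r g ^ 2 = r ^ 2 + (g ^ 2 - 1) * Real.log (g ^ 2) :=
  Real.sq_sqrt (add_nonneg (sq_nonneg r) (sub_one_mul_log_nonneg (sq_nonneg g)))

lemma sqrtDisc_neg (r g : ℝ) : sqrtDisc (-r) g = sqrtDisc r g := by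
  rw [sqrtDisc, neg_sq, sqrtDisc]

lemma sqrtDisc_one {r : ℝ} (hr : 0 ≤ r) : sqrtDisc r 1 = r := by
  simp [sqrtDisc, Real.sqrt_sq hr]

@[fun_prop]
lemma continuousAt_sqrtDisc {x : ℝ × ℝ} (hx : x.2 ≠ 0) :
    ContinuousAt (fun x : ℝ × ℝ => sqrtDisc x.1 x.2) x := by
  have hlog : ContinuousAt (fun x : ℝ × ℝ => Real.log (x.2 ^ 2)) x :=
    ContinuousAt.log (by fun_prop) (pow_ne_zero 2 hx)
  unfold sqrtDisc
  fun_prop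

/-- For `s = ± sqrtDisc r g`, a point where the densities of `N(-r, g²)` and `N(0, 1)` agree. The
root `s` is a separate argument so that both crossing points are instances of one formula. -/
noncomputable def crossing (r g s : ℝ) : ℝ :=
  (r + g * s) / (g ^ 2 - 1)

/-- The point `crossing r g s` in standard units `(x + r) / g` of `N(-r, g²)`. -/
noncomputable def stdCrossing (r g s : ℝ) : ℝ :=
  (r * g + s) / (g ^ 2 - 1)

/-- The difference at `crossing r g s` between the distribution functions of `N(-r, g²)` and
`N(0, 1)`. -/
noncomputable def crossingGap (r g s : ℝ) : ℝ :=
  Phi (stdCrossing r g s) - Phi (crossing r g s)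

lemma stdCrossing_eq_crossing_add {g : ℝ} (hg : g ^ 2 ≠ 1) (r s : ℝ) :
    stdCrossing r g s = crossing r g s + (r - s) / (g + 1) := by
  have hfac : g ^ 2 - 1 = (g - 1) * (g + 1) := by ring
  have hne : (g - 1) * (g + 1) ≠ 0 := hfac ▸ sub_ne_zero.2 hg
  have hsub : g - 1 ≠ 0 := left_ne_zero_of_mul hne
  have hadd : g + 1 ≠ 0 := right_ne_zero_of_mul hne
  rw [stdCrossing, crossing, hfac]
  field_simp
  ring

lemma crossing_neg_neg (r g s : ℝ) : crossing (-r) g (-s) = -crossing r g s := by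
  unfold crossing
  ring

lemma stdCrossing_neg_neg (r g s : ℝ) : stdCrossing (-r) g (-s) = -stdCrossing r g s := by
  unfold stdCrossing
  ring

lemma crossingGap_neg_neg (r g s : ℝ) : crossingGap (-r) g (-s) = -crossingGap r g s := by
  rw [crossingGap, crossing_neg_neg, stdCrossing_neg_neg, Phi_neg, Phi_neg, crossingGap]
  ring

lemma continuousAt_crossingGap {x : ℝ × ℝ} (hx : x.2 ^ 2 ≠ 1) {s : ℝ × ℝ → ℝ}
    (hs : ContinuousAt s x) : ContinuousAt (fun x : ℝ × ℝ => crossingGap x.1 x.2 (s x)) x := by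
  have hden : x.2 ^ 2 - 1 ≠ 0 := sub_ne_zero.2 hx
  unfold crossingGap crossing stdCrossing
  fun_prop (disch := assumption)

lemma crossing_neg_sqrtDisc {r g : ℝ} (hg : g ^ 2 ≠ 1) (h : r + g * sqrtDisc r g ≠ 0) :
    crossing r g (-sqrtDisc r g) =
      -(r ^ 2 + g ^ 2 * Real.log (g ^ 2)) / (r + g * sqrtDisc r g) := by
  rw [crossing, div_eq_div_iff (sub_ne_zero.2 hg) h]
  linear_combination -g ^ 2 * sq_sqrtDisc r g

end Crossing

section CalE

lemma calE_one (r : ℝ) : calE r 1 = Phi (-(|r| / 2)) :=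
  if_pos rfl

lemma calE_of_ne_one {g : ℝ} (hg : g ≠ 1) (r : ℝ) :
    calE r g = 1 / 2 + (crossingGap r g (sqrtDisc r g) - crossingGap r g (-sqrtDisc r g)) / 2 := by
  rw [calE, if_neg hg]
  simp only [crossingGap, crossing, stdCrossing, sqrtDisc, mul_neg, ← sub_eq_add_neg]
  ring

lemma calE_neg (r g : ℝ) : calE (-r) g = calE r g := by
  rcases eq_or_ne g 1 with rfl | hg
  · rw [calE_one, calE_one, abs_neg]
  · have hneg := crossingGap_neg_neg r g (sqrtDisc r g)
    have hpos := crossingGap_neg_neg r g (-sqrtDisc r g)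
    rw [neg_neg] at hpos
    rw [calE_of_ne_one hg, calE_of_ne_one hg, sqrtDisc_neg, hneg, hpos]
    ring

lemma calE_abs (r g : ℝ) : calE |r| g = calE r g := by
  rcases abs_choice r with h | h <;> rw [h]
  exact calE_neg r g

lemma continuousAt_calE_of_ne_one {x : ℝ × ℝ} (hpos : 0 < x.2) (hne : x.2 ≠ 1) :
    ContinuousAt (fun x : ℝ × ℝ => calE x.1 x.2) x := by
  have hsq := sq_ne_one_of_pos hpos hne
  have hdisc := continuousAt_sqrtDisc hpos.ne'
  have hgap := (continuousAt_crossingGap hsq hdisc).sub (continuousAt_crossingGap hsq hdisc.neg)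
  refine ((hgap.div_const 2).const_add (1 / 2)).congr ?_
  filter_upwards [continuous_snd.continuousAt.eventually_ne hne] with y hy
  exact (calE_of_ne_one hy y.1).symm

lemma tendsto_crossingGap_zero {ι : Type*} {l : Filter ι} {r g s : ι → ℝ}
    (hg : ∀ᶠ i in l, g i ^ 2 ≠ 1) (h : Tendsto (fun i => (r i - s i) / (g i + 1)) l (𝓝 0)) :
    Tendsto (fun i => crossingGap (r i) (g i) (s i)) l (𝓝 0) := by
  refine tendsto_comp_sub_comp_zero uniformContinuous_Phi (h.congr' ?_)
  filter_upwards [hg] with i hi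
  rw [stdCrossing_eq_crossing_add hi, add_sub_cancel_left]

lemma eventually_sq_ne_one (r : ℝ) : ∀ᶠ x : ℝ × ℝ in 𝓝[{x | x.2 = 1}ᶜ] (r, 1), x.2 ^ 2 ≠ 1 := by
  have hpos : ∀ᶠ x : ℝ × ℝ in 𝓝 (r, 1), 0 < x.2 :=
    continuous_snd.continuousAt.eventually (lt_mem_nhds one_pos)
  filter_upwards [hpos.filter_mono nhdsWithin_le_nhds, self_mem_nhdsWithin] with x hx hx1
  exact sq_ne_one_of_pos hx hx1

lemma tendsto_crossingGap_sqrtDisc {r : ℝ} (hr : 0 ≤ r) :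
    Tendsto (fun x : ℝ × ℝ => crossingGap x.1 x.2 (sqrtDisc x.1 x.2))
      (𝓝[{x | x.2 = 1}ᶜ] (r, 1)) (𝓝 0) := by
  refine tendsto_crossingGap_zero (eventually_sq_ne_one r) (Tendsto.mono_left ?_ nhdsWithin_le_nhds)
  have hcont : ContinuousAt (fun x : ℝ × ℝ => (x.1 - sqrtDisc x.1 x.2) / (x.2 + 1)) (r, 1) := by
    fun_prop (disch := norm_num)
  simpa [sqrtDisc_one hr] using hcont.tendsto

lemma tendsto_add_sqrtDisc_div {r : ℝ} (hr : 0 ≤ r) :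
    Tendsto (fun x : ℝ × ℝ => (x.1 - -sqrtDisc x.1 x.2) / (x.2 + 1))
      (𝓝[{x | x.2 = 1}ᶜ] (r, 1)) (𝓝 r) := by
  have hcont : ContinuousAt (fun x : ℝ × ℝ => (x.1 - -sqrtDisc x.1 x.2) / (x.2 + 1)) (r, 1) := by
    fun_prop (disch := norm_num)
  have hval : (r - -sqrtDisc r 1) / (1 + 1) = r := by rw [sqrtDisc_one hr]; ring
  exact (hval ▸ hcont.tendsto).mono_left nhdsWithin_le_nhds

lemma tendsto_crossing_neg_sqrtDisc {r : ℝ} (hr : 0 < r) :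
    Tendsto (fun x : ℝ × ℝ => crossing x.1 x.2 (-sqrtDisc x.1 x.2))
      (𝓝[{x | x.2 = 1}ᶜ] (r, 1)) (𝓝 (-(r / 2))) := by
  have hden : ContinuousAt (fun x : ℝ × ℝ => x.1 + x.2 * sqrtDisc x.1 x.2) (r, 1) := by
    fun_prop (disch := norm_num)
  have hden_ne : r + 1 * sqrtDisc r 1 ≠ 0 := by rw [sqrtDisc_one hr.le]; positivity
  have hlog : ContinuousAt (fun x : ℝ × ℝ => Real.log (x.2 ^ 2)) (r, 1) :=
    ContinuousAt.log (by fun_prop) (by norm_num)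
  have hquot : ContinuousAt (fun x : ℝ × ℝ =>
      -(x.1 ^ 2 + x.2 ^ 2 * Real.log (x.2 ^ 2)) / (x.1 + x.2 * sqrtDisc x.1 x.2)) (r, 1) :=
    ContinuousAt.div (by fun_prop) hden hden_ne
  have hval : -(r ^ 2 + 1 ^ 2 * Real.log (1 ^ 2)) / (r + 1 * sqrtDisc r 1) = -(r / 2) := by
    rw [sqrtDisc_one hr.le, one_pow, Real.log_one]
    field_simp
    ring
  refine ((hval ▸ hquot.tendsto).mono_left nhdsWithin_le_nhds).congr' ?_
  filter_upwards [eventually_sq_ne_one r,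
    (hden.eventually_ne hden_ne).filter_mono nhdsWithin_le_nhds] with x hx hx_den
  exact (crossing_neg_sqrtDisc hx hx_den).symm

lemma tendsto_crossingGap_neg_sqrtDisc {r : ℝ} (hr : 0 ≤ r) :
    Tendsto (fun x : ℝ × ℝ => crossingGap x.1 x.2 (-sqrtDisc x.1 x.2))
      (𝓝[{x | x.2 = 1}ᶜ] (r, 1)) (𝓝 (Phi (r / 2) - Phi (-(r / 2)))) := by
  have hshift := tendsto_add_sqrtDisc_div hr
  rcases hr.eq_or_lt with rfl | hr_pos
  · simpa using tendsto_crossingGap_zero (eventually_sq_ne_one 0) hshift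
  · have hcross := tendsto_crossing_neg_sqrtDisc hr_pos
    have hstd : Tendsto (fun x : ℝ × ℝ => stdCrossing x.1 x.2 (-sqrtDisc x.1 x.2))
        (𝓝[{x | x.2 = 1}ᶜ] (r, 1)) (𝓝 (r / 2)) := by
      have hval : -(r / 2) + r = r / 2 := by ring
      refine (hval ▸ hcross.add hshift).congr' ?_
      filter_upwards [eventually_sq_ne_one r] with x hx
      exact (stdCrossing_eq_crossing_add hx _ _).symm
    exact ((continuous_Phi.tendsto _).comp hstd).sub ((continuous_Phi.tendsto _).comp hcross)

lemma tendsto_calE_one {r : ℝ} (hr : 0 ≤ r) :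
    Tendsto (fun x : ℝ × ℝ => calE x.1 x.2) (𝓝[{x | x.2 = 1}ᶜ] (r, 1)) (𝓝 (calE r 1)) := by
  have hlim := (((tendsto_crossingGap_sqrtDisc hr).sub
    (tendsto_crossingGap_neg_sqrtDisc hr)).div_const 2).const_add (1 / 2)
  have hval : 1 / 2 + (0 - (Phi (r / 2) - Phi (-(r / 2)))) / 2 = calE r 1 := by
    rw [calE_one, abs_of_nonneg hr, Phi_neg]
    ring
  refine (hval ▸ hlim).congr' ?_
  filter_upwards [self_mem_nhdsWithin] with x hx
  exact (calE_of_ne_one hx x.1).symm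

lemma continuousAt_calE_one {r : ℝ} (hr : 0 ≤ r) :
    ContinuousAt (fun x : ℝ × ℝ => calE x.1 x.2) (r, 1) := by
  rw [← continuousWithinAt_univ, ← union_compl_self {x : ℝ × ℝ | x.2 = 1}]
  refine ContinuousWithinAt.union ?_ (tendsto_calE_one hr)
  have hcont : Continuous fun x : ℝ × ℝ => Phi (-(|x.1| / 2)) := by fun_prop
  refine hcont.continuousWithinAt.congr (fun x hx => ?_) (calE_one r)
  rw [show x.2 = 1 from hx, calE_one]

theorem continuousAt_calE {x : ℝ × ℝ} (hx : 0 < x.2) :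
    ContinuousAt (fun x : ℝ × ℝ => calE x.1 x.2) x := by
  obtain ⟨r, g⟩ := x
  rcases eq_or_ne g 1 with rfl | hg
  · have habs : ContinuousAt (fun x : ℝ × ℝ => calE |x.1| x.2) (r, 1) :=
      ContinuousAt.comp₂ (f := fun x : ℝ × ℝ => calE x.1 x.2)
        (continuousAt_calE_one (abs_nonneg r)) (by fun_prop) (by fun_prop)
    simpa only [calE_abs] using habs
  · exact continuousAt_calE_of_ne_one hx hg

end CalE

section Evec

lemma sqrt_dotProduct_mulVec_smul {n : Type*} [Fintype n] (S : Matrix n n ℝ) (c : ℝ) (v : n → ℝ) :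
    √((c • v) ⬝ᵥ S *ᵥ (c • v)) = |c| * √(v ⬝ᵥ S *ᵥ v) := by
  rw [mulVec_smul, smul_dotProduct, dotProduct_smul, smul_eq_mul, smul_eq_mul, ← mul_assoc,
    Real.sqrt_mul (mul_self_nonneg c), Real.sqrt_mul_self_eq_abs]

variable {p : ℕ} (μ0 μ1 : Fin p → ℝ) (S0 S1 : Matrix (Fin p) (Fin p) ℝ)

lemma Evec_smul {c : ℝ} (hc : c ≠ 0) (v : Fin p → ℝ) :
    Evec μ0 μ1 S0 S1 (c • v) = Evec μ0 μ1 S0 S1 v := by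
  unfold Evec
  rw [sqrt_dotProduct_mulVec_smul, sqrt_dotProduct_mulVec_smul,
    mul_div_mul_left _ _ (abs_ne_zero.2 hc), smul_dotProduct, smul_dotProduct, ← smul_sub,
    smul_eq_mul]
  rcases abs_choice c with h | h
  · rw [h, mul_div_mul_left _ _ hc]
  · rw [h, neg_mul, div_neg, mul_div_mul_left _ _ hc, calE_neg]

variable {S0 S1}

lemma continuousAt_Evec {v : Fin p → ℝ} (h0 : 0 < v ⬝ᵥ S0 *ᵥ v) (h1 : 0 < v ⬝ᵥ S1 *ᵥ v) :
    ContinuousAt (Evec μ0 μ1 S0 S1) v := by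
  have hσ0 := Real.sqrt_pos.2 h0
  have hσ1 := Real.sqrt_pos.2 h1
  have hσ1_ne := hσ1.ne'
  exact ContinuousAt.comp₂ (f := fun x : ℝ × ℝ => calE x.1 x.2)
    (continuousAt_calE (div_pos hσ0 hσ1))
    (by fun_prop (disch := assumption)) (by fun_prop (disch := assumption))

lemma continuousOn_Evec (h0 : S0.PosDef) (h1 : S1.PosDef) :
    ContinuousOn (Evec μ0 μ1 S0 S1) {0}ᶜ := fun v hv =>
  (continuousAt_Evec μ0 μ1 (by simpa using h0.dotProduct_mulVec_pos hv)
    (by simpa using h1.dotProduct_mulVec_pos hv)).continuousWithinAt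

end Evec

lemma continuous_projectivization_lift {K V X : Type*} [DivisionRing K] [AddCommGroup V]
    [Module K V] [TopologicalSpace V] [TopologicalSpace X] {f : {v : V // v ≠ 0} → X}
    (hf : ∀ (a b : {v : V // v ≠ 0}) (t : K), (a : V) = t • (b : V) → f a = f b)
    (hcont : Continuous f) : Continuous (Projectivization.lift f hf) :=
  hcont.quotient_lift _

/-- E is homogeneous of degree 0, uniformly continuous on the unit sphere,
even (E(α) = E(−α)), and induces a well-defined continuous function on real
projective space. -/
theorem Evec_homogeneous_uniformContinuous_projective {p : ℕ} (hp : 1 ≤ p)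
    (μ0 μ1 : EuclideanSpace ℝ (Fin p)) (S0 S1 : Matrix (Fin p) (Fin p) ℝ)
    (h0 : S0.PosDef) (h1 : S1.PosDef) :
    (∀ c : ℝ, c ≠ 0 → ∀ α : EuclideanSpace ℝ (Fin p), α ≠ 0 →
        Evec μ0 μ1 S0 S1 (c • α) = Evec μ0 μ1 S0 S1 α) ∧
    UniformContinuousOn (fun α : EuclideanSpace ℝ (Fin p) => Evec μ0 μ1 S0 S1 α)
      (Metric.sphere (0 : EuclideanSpace ℝ (Fin p)) 1) ∧
    (∀ α : EuclideanSpace ℝ (Fin p), ‖α‖ = 1 →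
        Evec μ0 μ1 S0 S1 (-α) = Evec μ0 μ1 S0 S1 α) ∧
    ∃ F : Projectivization ℝ (EuclideanSpace ℝ (Fin p)) → ℝ, Continuous F ∧
      ∀ (α : EuclideanSpace ℝ (Fin p)) (hα : α ≠ 0),
        F (Projectivization.mk ℝ α hα) = Evec μ0 μ1 S0 S1 α := by
  have hcont : ContinuousOn (fun α : EuclideanSpace ℝ (Fin p) => Evec μ0 μ1 S0 S1 α) {0}ᶜ :=
    (continuousOn_Evec μ0 μ1 h0 h1).comp (PiLp.continuous_ofLp 2 _).continuousOn
      fun α hα => (WithLp.ofLp_eq_zero 2).not.2 hα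
  have hsmul : ∀ c : ℝ, c ≠ 0 → ∀ α : EuclideanSpace ℝ (Fin p),
      Evec μ0 μ1 S0 S1 (c • α) = Evec μ0 μ1 S0 S1 α :=
    fun c hc α => Evec_smul μ0 μ1 S0 S1 hc α
  refine ⟨fun c hc α _ => hsmul c hc α, ?_, fun α _ => ?_, ?_⟩
  · exact (isCompact_sphere 0 1).uniformContinuousOn_of_continuous
      (hcont.mono fun α hα => ne_zero_of_mem_unit_sphere ⟨α, hα⟩)
  · simpa using hsmul (-1) (by norm_num) α
  · refine ⟨Projectivization.lift (fun a => Evec μ0 μ1 S0 S1 a.1) fun a b t hab => ?_,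
      continuous_projectivization_lift _ hcont.domRestrict, fun α hα => rfl⟩
    have ht : t ≠ 0 := by
      rintro rfl
      exact a.2 (by rw [hab, zero_smul])
    rw [hab]
    exact hsmul t ht b
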